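/- Fix k ∈ ℕ, m ≠ 0, q ∈ ℝ, real constants Z^{a₁…a_r} for 0 ≤ r ≤ k and a₁,…,a_r ∈ {1,2,3} (with the r = 0 constant equal to 1), and smooth functions Γ^ρ_{μν}, F^ρ_μ : ℝ⁴ → ℝ such that m Γ^μ_{00}(x) = q F^μ_0(x) for all x ∈ ℝ⁴ and all μ (the adapted-coordinate Lorentz-force condition). Then the charged dust multipole stress-energy distribution T^{μν} = m δ^μ_0 δ^ν_0 Σ_{r=0}^{k}(1/r!) Σ Z^{a₁…a_r} ∂_{a₁}⋯∂_{a_r}δ³(z) and current J^μ = q δ^μ_0 Σ_{r=0}^{k}(1/r!) Σ Z^{a₁…a_r} ∂_{a₁}⋯∂_{a_r}δ³(z) satisfy the divergence condition ∇_μ T^{μν} = g^{νρ}F_{ρμ}J^μ weakly: for every test covector field θ : ℝ⁴ → ℝ⁴, Σ_{r=0}^{k} ((−1)^r/r!) Σ_{a₁,…,a_r} Z^{a₁…a_r} ∫_ℝ ( ∂_{a₁}⋯∂_{a_r}[ m Σ_ρ Γ^ρ_{00}θ_ρ − m ∂_0θ_0 ] )(σ,0) dσ = Σ_{r=0}^{k}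 ((−1)^r/r!) Σ_{a₁,…,a_r} Z^{a₁…a_r} ∫_ℝ ( ∂_{a₁}⋯∂_{a_r}[ q Σ_ρ F^ρ_0 θ_ρ ] )(σ,0) dσ. -/

import Mathlib

/-!
The Lorentz-force condition `m Γ^ρ₀₀ = q F^ρ₀` makes the connection term on the left equal to the
force term on the right as functions on `ℝ⁴`. What remains is `m ∂₀θ₀`, whose contribution vanishes
multipole by multipole: since partial derivatives commute (`iteratedFDeriv_fderiv_apply_comm`), the
spatial derivatives of `∂₀θ₀` restricted to the worldline are the `σ`-derivative of a compactly
supported function, which integrates to zero (`integral_pderivs_pd_zero`). The constancy of the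
coefficients `Z` in `σ` is what allows them to be taken out of the integral.
-/

open MeasureTheory

noncomputable section

/-- Standard basis vector `e_μ` of `ℝ⁴`. -/
def e4 (μ : Fin 4) : Fin 4 → ℝ := fun ν => if ν = μ then 1 else 0

/-- Embedding of Latin (spatial) indices `{1,2,3}` into `{0,1,2,3}`. -/
def sp (a : Fin 3) : Fin 4 := a.succ

/-- The point `(σ,0,0,0)` on the worldline. -/
def pt (σ : ℝ) : Fin 4 → ℝ := fun μ => if μ = 0 then σ else 0

/-- Partial derivative `∂_μ ψ`. -/
def pd (μ : Fin 4) (ψ : (Fin 4 → ℝ) → ℝ) : (Fin 4 → ℝ) → ℝ :=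
  fun x => fderiv ℝ ψ x (e4 μ)

/-- Iterated spatial partial derivative `∂_{a₁}⋯∂_{a_r} ψ`. -/
def pderivs (r : ℕ) (a : Fin r → Fin 3) (ψ : (Fin 4 → ℝ) → ℝ) (x : Fin 4 → ℝ) : ℝ :=
  iteratedFDeriv ℝ r ψ x (fun i => e4 (sp (a i)))

lemma contDiff_iteratedFDeriv_apply {g : (Fin 4 → ℝ) → ℝ} (hg : ContDiff ℝ (⊤ : ℕ∞) g)
    (r : ℕ) (w : Fin r → Fin 4 → ℝ) :
    ContDiff ℝ (⊤ : ℕ∞) (fun y => iteratedFDeriv ℝ r g y w) :=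
  (ContinuousMultilinearMap.apply ℝ (fun _ : Fin r => Fin 4 → ℝ) ℝ w).contDiff.comp
    (hg.iteratedFDeriv_right (m := (⊤ : ℕ∞)) (i := r) (by exact_mod_cast le_top))

/-- A directional derivative commutes with an iterated derivative evaluated on fixed vectors.
The induction step is the symmetry of second derivatives. -/
lemma iteratedFDeriv_fderiv_apply_comm {g : (Fin 4 → ℝ) → ℝ} (hg : ContDiff ℝ (⊤ : ℕ∞) g)
    (v : Fin 4 → ℝ) (r : ℕ) (w : Fin r → Fin 4 → ℝ) (x : Fin 4 → ℝ) :
    iteratedFDeriv ℝ r (fun y => fderiv ℝ g y v) x w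
      = fderiv ℝ (fun y => iteratedFDeriv ℝ r g y w) x v := by
  induction r generalizing x with
  | zero => simp
  | succ r ih =>
    have hgv : ContDiff ℝ (⊤ : ℕ∞) (fun y => fderiv ℝ g y v) :=
      (hg.fderiv_right (m := (⊤ : ℕ∞)) (by simp)).clm_apply contDiff_const
    have hG : ContDiff ℝ (⊤ : ℕ∞) (fun y => iteratedFDeriv ℝ r g y (Fin.tail w)) :=
      contDiff_iteratedFDeriv_apply hg r _
    -- The `(r + 1)`-st derivative is the derivative along `w 0` of the `r`-th one.
    have key : ∀ {h : (Fin 4 → ℝ) → ℝ}, ContDiff ℝ (⊤ : ℕ∞) h → ∀ y,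
        iteratedFDeriv ℝ (r + 1) h y w
          = fderiv ℝ (fun y => iteratedFDeriv ℝ r h y (Fin.tail w)) y (w 0) := by
      intro h hh y
      exact ((hh.differentiable_iteratedFDeriv (by exact_mod_cast ENat.natCast_lt_top r)
        y).iteratedFDeriv_succ_apply_left')
    rw [key hgv, funext (key hg)]
    simp_rw [ih]
    have hd : DifferentiableAt ℝ (fderiv ℝ (fun y => iteratedFDeriv ℝ r g y (Fin.tail w))) x :=
      (hG.fderiv_right (m := (⊤ : ℕ∞)) (by simp)).differentiable (by simp) x
    rw [fderiv_clm_apply hd (by fun_prop), fderiv_clm_apply hd (by fun_prop)]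
    have h2 : (2 : WithTop ℕ∞) ≤ ((⊤ : ℕ∞) : WithTop ℕ∞) :=
      WithTop.coe_le_coe.2 (le_top : (2 : ℕ∞) ≤ ⊤)
    simpa using (hG.contDiffAt.isSymmSndFDerivAt (by simpa using h2)).eq (w 0) v

lemma contDiff_pderivs {φ : (Fin 4 → ℝ) → ℝ} (hφ : ContDiff ℝ (⊤ : ℕ∞) φ)
    (r : ℕ) (a : Fin r → Fin 3) : ContDiff ℝ (⊤ : ℕ∞) (pderivs r a φ) :=
  contDiff_iteratedFDeriv_apply hφ r _

lemma contDiff_pd {φ : (Fin 4 → ℝ) → ℝ} (hφ : ContDiff ℝ (⊤ : ℕ∞) φ) (μ : Fin 4) :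
    ContDiff ℝ (⊤ : ℕ∞) (pd μ φ) :=
  (hφ.fderiv_right (m := (⊤ : ℕ∞)) (by simp)).clm_apply contDiff_const

lemma hasDerivAt_pt (σ : ℝ) : HasDerivAt pt (e4 0) σ := by
  rw [hasDerivAt_pi]
  intro μ
  by_cases h : μ = 0
  · simpa [pt, e4, h] using hasDerivAt_id' σ
  · simpa [pt, e4, h] using hasDerivAt_const σ (0 : ℝ)

lemma continuous_pt : Continuous pt :=
  continuous_iff_continuousAt.2 fun σ => (hasDerivAt_pt σ).continuousAt

lemma isClosedEmbedding_pt : Topology.IsClosedEmbedding pt :=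
  Function.LeftInverse.isClosedEmbedding (f := fun x : Fin 4 → ℝ => x 0)
    (fun σ => by simp [pt]) (continuous_apply 0) continuous_pt

lemma integrable_pderivs_pt {φ : (Fin 4 → ℝ) → ℝ} (hφ : ContDiff ℝ (⊤ : ℕ∞) φ)
    (hc : HasCompactSupport φ) (r : ℕ) (a : Fin r → Fin 3) :
    Integrable (fun σ => pderivs r a φ (pt σ)) := by
  have h1 : HasCompactSupport (pderivs r a φ) :=
    (hc.iteratedFDeriv (𝕜 := ℝ) r).comp_left
      (g := fun L : ContinuousMultilinearMap ℝ (fun _ : Fin r => Fin 4 → ℝ) ℝ =>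
        L (fun i => e4 (sp (a i)))) rfl
  exact ((contDiff_pderivs hφ r a).continuous.comp continuous_pt).integrable_of_hasCompactSupport
    (h1.comp_isClosedEmbedding isClosedEmbedding_pt)

/-- Along the worldline, spatial derivatives of `∂₀φ` are total `σ`-derivatives of compactly
supported functions. -/
lemma integral_pderivs_pd_zero {φ : (Fin 4 → ℝ) → ℝ} (hφ : ContDiff ℝ (⊤ : ℕ∞) φ)
    (hc : HasCompactSupport φ) (r : ℕ) (a : Fin r → Fin 3) :
    ∫ σ, pderivs r a (pd 0 φ) (pt σ) = 0 := by
  refine integral_eq_zero_of_hasDerivAt_of_integrable (f := fun σ => pderivs r a φ (pt σ)) ?_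
    (integrable_pderivs_pt (contDiff_pd hφ 0) (hc.fderiv_apply (𝕜 := ℝ) (e4 0)) r a)
    (integrable_pderivs_pt hφ hc r a)
  intro σ
  have h := ((contDiff_pderivs hφ r a).differentiable (by simp) (pt σ)).hasFDerivAt.comp_hasDerivAt
    σ (hasDerivAt_pt σ)
  have e : pderivs r a (pd 0 φ) (pt σ) = fderiv ℝ (pderivs r a φ) (pt σ) (e4 0) :=
    iteratedFDeriv_fderiv_apply_comm hφ _ _ _ _
  rw [e]
  exact h

/-- In coordinates adapted to a congruence of Lorentz-force worldlines
(`m Γ^μ₀₀ = q F^μ₀`), the charged dust multipole stress-energy tensor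
`T^{μν} = m δ^μ₀δ^ν₀ Σ_r (1/r!) Z^{a₁…a_r}∂_{a₁}⋯∂_{a_r}δ³(z)` with current
`J^μ = q δ^μ₀ Σ_r (1/r!) Z^{a₁…a_r}∂_{a₁}⋯∂_{a_r}δ³(z)` satisfies the divergence
condition `∇_μT^{μν} = g^{νρ}F_{ρμ}J^μ` weakly. -/
theorem charged_dust_multipole_divergence
    (k : ℕ) (m q : ℝ) (hm : m ≠ 0)
    (Z : (r : ℕ) → (Fin r → Fin 3) → ℝ)
    (hZ0 : ∀ a : Fin 0 → Fin 3, Z 0 a = 1)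
    (Γ : Fin 4 → Fin 4 → Fin 4 → (Fin 4 → ℝ) → ℝ)
    (hΓs : ∀ ρ μ ν, ContDiff ℝ (⊤ : ℕ∞) (Γ ρ μ ν))
    (F : Fin 4 → Fin 4 → (Fin 4 → ℝ) → ℝ)
    (hFs : ∀ ρ μ, ContDiff ℝ (⊤ : ℕ∞) (F ρ μ))
    (hLorentz : ∀ μ x, m * Γ μ 0 0 x = q * F μ 0 x)
    (θ : (Fin 4 → ℝ) → Fin 4 → ℝ)
    (hθs : ContDiff ℝ (⊤ : ℕ∞) θ) (hθc : HasCompactSupport θ) :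
    ∑ r ∈ Finset.range (k + 1), ((-1 : ℝ) ^ r / (Nat.factorial r : ℝ)) *
      ∑ a : Fin r → Fin 3, Z r a *
        ∫ σ : ℝ, pderivs r a
          (fun x => m * (∑ ρ : Fin 4, Γ ρ 0 0 x * θ x ρ) - m * pd 0 (fun y => θ y 0) x)
          (pt σ)
    =
    ∑ r ∈ Finset.range (k + 1), ((-1 : ℝ) ^ r / (Nat.factorial r : ℝ)) *
      ∑ a : Fin r → Fin 3, Z r a *
        ∫ σ : ℝ, pderivs r a
          (fun x => q * ∑ ρ : Fin 4, F ρ 0 x * θ x ρ) (pt σ) := by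
  have hθ : ∀ ρ, ContDiff ℝ (⊤ : ℕ∞) (fun x => θ x ρ) := fun ρ => contDiff_pi.1 hθs ρ
  have hθc' : ∀ ρ, HasCompactSupport (fun x => θ x ρ) := fun ρ =>
    hθc.comp_left (g := fun v : Fin 4 → ℝ => v ρ) rfl
  -- By the Lorentz-force condition the connection term equals the force term.
  have hforce : ∀ x, m * (∑ ρ : Fin 4, Γ ρ 0 0 x * θ x ρ) = q * ∑ ρ : Fin 4, F ρ 0 x * θ x ρ := by
    intro x
    simp only [Finset.mul_sum, ← mul_assoc, hLorentz]
  simp_rw [hforce]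
  set f : (Fin 4 → ℝ) → ℝ := fun x => q * ∑ ρ : Fin 4, F ρ 0 x * θ x ρ with hf
  have hfs : ContDiff ℝ (⊤ : ℕ∞) f :=
    contDiff_const.mul (ContDiff.sum fun ρ _ => (hFs ρ 0).mul (hθ ρ))
  have hfc : HasCompactSupport f := by
    refine hθc.mono fun x hx => ?_
    contrapose! hx
    simp only [Function.mem_support, not_not] at hx ⊢
    simp [hf, hx]
  refine Finset.sum_congr rfl fun r _ => ?_
  congr 1
  refine Finset.sum_congr rfl fun a _ => ?_
  congr 1
  have hp : ContDiff ℝ (⊤ : ℕ∞) (pd 0 fun y => θ y 0) := contDiff_pd (hθ 0) 0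
  have hle : (r : WithTop ℕ∞) ≤ ((⊤ : ℕ∞) : WithTop ℕ∞) := by exact_mod_cast le_top
  have hsplit : ∀ x, pderivs r a (fun x => f x - m * pd 0 (fun y => θ y 0) x) x
      = pderivs r a f x - m * pderivs r a (pd 0 fun y => θ y 0) x := by
    intro x
    have h1 := iteratedFDeriv_sub_apply (x := x) (hfs.of_le hle).contDiffAt
      ((contDiff_const (c := m)).mul (hp.of_le hle)).contDiffAt
    have h2 := iteratedFDeriv_const_smul_apply (a := m) (x := x) (hp.of_le hle).contDiffAt
    have h3 := congrArg (fun L => L (fun i => e4 (sp (a i)))) (h1.trans (congrArg _ h2))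
    exact h3
  change ∫ σ, pderivs r a (fun x => f x - m * pd 0 (fun y => θ y 0) x) (pt σ)
    = ∫ σ, pderivs r a f (pt σ)
  simp_rw [hsplit]
  rw [integral_sub (integrable_pderivs_pt hfs hfc r a)
      ((integrable_pderivs_pt hp ((hθc' 0).fderiv_apply (𝕜 := ℝ) (e4 0)) r a).const_mul m),
    integral_const_mul, integral_pderivs_pd_zero (hθ 0) (hθc' 0), mul_zero, sub_zero]

end
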